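/- Let T be a uniquely ergodic continuous map of a compact metric space X with unique invariant probability measure μ. Let 1 = b₁ < b₂ < ⋯ be an increasing sequence of integers with b_{k+1} − b_k → ∞ and let (x_k) be an arbitrary sequence of points in X. Define y ∈ X^ℕ by y_n := Tⁿ x_k whenever b_k ≤ n < b_{k+1}, let S be the shift on X^ℕ (with the product topology), and let Y be the closure of the forward orbit {Sⁿ y : n ≥ 0} in X^ℕ. Then (Y,S) is uniquely ergodic; its unique S-invariant probability measure ν is the pushforward of μ under the map x ↦ (x, Tx, T²x, …) (equivalently, ν(A₁ × A₂ × ⋯ × A_m × X × X × ⋯) = μ(A₁ ∩ T⁻¹A₂ ∩ ⋯ ∩ T^{−m+1}A_m)); and the measure-theoretic system (Y,ν,S) is measure-theoretically isomorphic to (X,μ,T). -/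

import Mathlib

open MeasureTheory Filter

/-- `S` is uniquely ergodic with unique invariant Borel probability measure `ν`. -/
def UniquelyErgodicWith {Y : Type*} [MeasurableSpace Y] (S : Y → Y) (ν : Measure Y) : Prop :=
  IsProbabilityMeasure ν ∧ ν.map S = ν ∧
  ∀ μ' : Measure Y, IsProbabilityMeasure μ' → μ'.map S = μ' → μ' = ν

/-- `(X,μ,T)` and `(Y,ν,S)` are measure-theoretically isomorphic: there is an invertible
(mod 0) measure-preserving map intertwining the transformations almost everywhere. -/
def MeasureIso {X Y : Type*} [MeasurableSpace X] [MeasurableSpace Y]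
    (T : X → X) (μ : Measure X) (S : Y → Y) (ν : Measure Y) : Prop :=
  ∃ φ : X → Y, ∃ ψ : Y → X, Measurable φ ∧ Measurable ψ ∧
    μ.map φ = ν ∧
    (∀ᵐ x ∂μ, ψ (φ x) = x) ∧ (∀ᵐ y ∂ν, φ (ψ y) = y) ∧
    (∀ᵐ x ∂μ, φ (T x) = S (φ x))

theorem aux_kb {E : Type*} [TopologicalSpace E] [T2Space E] [CompactSpace E]
    [HasOuterApproxClosed E] [MeasurableSpace E] [BorelSpace E]
    (S : E → E) (hS : Continuous S) (z : E) :
    ∃ κ : Measure E, IsProbabilityMeasure κ ∧ κ.map S = κ := by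
  classical
  have hprob : ∀ N : ℕ, IsProbabilityMeasure
      (((N + 1 : ℕ) : ENNReal)⁻¹ • ∑ i ∈ Finset.range (N + 1), Measure.dirac (S^[i] z)) := by
    intro N
    constructor
    simp only [Measure.smul_apply, Measure.coe_finsetSum, Finset.sum_apply, measure_univ,
      Finset.sum_const, Finset.card_range, smul_eq_mul, nsmul_eq_mul, mul_one]
    exact ENNReal.inv_mul_cancel (by simp) (by simp)
  let A : ℕ → ProbabilityMeasure E := fun N => ⟨_, hprob N⟩
  have hint : ∀ (N : ℕ) (f : BoundedContinuousFunction E ℝ), ∫ w, f w ∂(A N : Measure E) =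
      ((N : ℝ) + 1)⁻¹ * ∑ i ∈ Finset.range (N + 1), f (S^[i] z) := by
    intro N f
    change ∫ w, f w ∂(((N + 1 : ℕ) : ENNReal)⁻¹ •
      ∑ i ∈ Finset.range (N + 1), Measure.dirac (S^[i] z)) = _
    rw [integral_smul_measure, integral_finset_sum_measure]
    · have : ∀ i, ∫ w, f w ∂(Measure.dirac (S^[i] z)) = f (S^[i] z) := fun i =>
        integral_dirac' _ _ f.continuous.stronglyMeasurable
      simp only [this, smul_eq_mul, ENNReal.toReal_inv, ENNReal.toReal_natCast]
      push_cast
      rfl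
    · intro i _
      exact f.integrable _
  obtain ⟨κ, -, hκ⟩ := isCompact_univ.ultrafilter_le_nhds
    ((hyperfilter ℕ).map A) (by simp)
  have hκ' : Tendsto A (hyperfilter ℕ : Filter ℕ) (nhds κ) := hκ
  refine ⟨κ, inferInstance, ?_⟩
  haveI : IsProbabilityMeasure ((κ : Measure E).map S) :=
    Measure.isProbabilityMeasure_map hS.measurable.aemeasurable
  apply ext_of_forall_integral_eq_of_IsFiniteMeasure
  intro f
  rw [integral_map hS.measurable.aemeasurable f.continuous.aestronglyMeasurable]
  let g : BoundedContinuousFunction E ℝ := f.compContinuous ⟨S, hS⟩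
  have h1 := ProbabilityMeasure.tendsto_iff_forall_integral_tendsto.1 hκ' f
  have h2 := ProbabilityMeasure.tendsto_iff_forall_integral_tendsto.1 hκ' g
  have h3 : Tendsto (fun N : ℕ => ∫ w, g w ∂(A N : Measure E) - ∫ w, f w ∂(A N : Measure E))
      atTop (nhds 0) := by
    have e : ∀ N : ℕ, ∫ w, g w ∂(A N : Measure E) - ∫ w, f w ∂(A N : Measure E)
        = ((N : ℝ) + 1)⁻¹ * (f (S^[N+1] z) - f z) := by
      intro N
      rw [hint, hint, ← mul_sub, ← Finset.sum_sub_distrib]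
      congr 1
      have := Finset.sum_range_sub (fun i => f (S^[i] z)) (N + 1)
      simp only [Function.iterate_zero, id] at this
      rw [← this]
      refine Finset.sum_congr rfl fun i _ => ?_
      rw [Function.iterate_succ_apply']
      rfl
    simp only [e]
    refine squeeze_zero_norm (a := fun N : ℕ => (1 / ((N : ℝ) + 1)) * (2 * ‖f‖)) (fun N => ?_) ?_
    · rw [norm_mul, norm_inv, one_div]
      have : ‖(N : ℝ) + 1‖ = N + 1 := Real.norm_of_nonneg (by positivity)
      rw [this]
      gcongr
      calc ‖f (S^[N+1] z) - f z‖ ≤ ‖f (S^[N+1] z)‖ + ‖f z‖ := norm_sub_le _ _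
        _ ≤ ‖f‖ + ‖f‖ := add_le_add (f.norm_coe_le_norm _) (f.norm_coe_le_norm _)
        _ = _ := by ring
    · simpa using (tendsto_one_div_add_atTop_nhds_zero_nat (𝕜 := ℝ)).mul_const (2 * ‖f‖)
  have h4 := tendsto_nhds_unique (h2.sub h1) (h3.mono_left (Nat.hyperfilter_le_atTop))
  exact sub_eq_zero.1 h4

theorem aux_comb {X : Type*} (T : X → X) (b : ℕ → ℕ) (hbmono : ∀ k ≥ 1, b k < b (k + 1))
    (hbgap : Tendsto (fun k : ℕ => b (k + 1) - b k) atTop atTop)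
    (x : ℕ → X)
    (y : ℕ → X) (hy : ∀ k ≥ 1, ∀ n : ℕ, b k ≤ n → n < b (k + 1) → y n = T^[n] (x k)) (M : ℕ) :
    ∃ N, ∀ n ≥ N, ∀ i j, i < j → j < M →
      y (n + i + 1) = T (y (n + i)) ∨ y (n + j + 1) = T (y (n + j)) := by
  obtain ⟨K0, hK0⟩ := (tendsto_atTop.1 hbgap M).exists_forall_of_atTop
  obtain ⟨K, hK1, hK⟩ : ∃ K ≥ 1, ∀ k ≥ K, M ≤ b (k + 1) - b k :=
    ⟨K0 + 1, by omega, fun k hk => hK0 k (by omega)⟩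
  have good : ∀ k ≥ 1, ∀ n, b k ≤ n → n + 1 < b (k + 1) → y (n + 1) = T (y n) := by
    intro k hk n h1 h2
    rw [hy k hk n h1 (by omega), hy k hk (n + 1) (by omega) h2, Function.iterate_succ_apply']
  have hloc : ∀ d, ∃ k ≥ K, b k ≤ b K + d ∧ b K + d < b (k + 1) := by
    intro d
    induction d with
    | zero => exact ⟨K, le_rfl, le_rfl, hbmono K hK1⟩
    | succ d ih =>
      obtain ⟨k, hk, h1, h2⟩ := ih
      by_cases h : b K + (d + 1) < b (k + 1)
      · exact ⟨k, hk, by omega, h⟩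
      · have := hbmono (k + 1) (by omega)
        exact ⟨k + 1, by omega, by omega, by omega⟩
  refine ⟨b K, fun n hn i j hij hj => ?_⟩
  obtain ⟨k, hk, h1, h2⟩ := hloc (n + i - b K)
  by_cases h : n + i + 1 < b (k + 1)
  · left
    exact good k (by omega) _ (by omega) h
  · right
    have := hK (k + 1) (by omega)
    have := hbmono (k + 1) (by omega)
    exact good (k + 1) (by omega) _ (by omega) (by omega)

theorem aux_null {X : Type*} [MetricSpace X] [CompactSpace X] [MeasurableSpace X] [BorelSpace X]
    (T : X → X) (hT : Continuous T) (y : ℕ → X)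
    (hy : ∀ M, ∃ N, ∀ n ≥ N, ∀ i j, i < j → j < M →
      y (n + i + 1) = T (y (n + i)) ∨ y (n + j + 1) = T (y (n + j)))
    (κ : Measure (ℕ → X)) [IsProbabilityMeasure κ]
    (hκ : κ.map (fun z n => z (n + 1)) = κ)
    (hκY : κ (closure {z : ℕ → X | ∃ n : ℕ, z = fun m => y (m + n)}) = 1) :
    ∀ᵐ z ∂κ, ∀ n, z n = T^[n] (z 0) := by
  have hmp : ∀ k, κ.map (fun (z : ℕ → X) n => z (n + k)) = κ := by
    intro k
    induction k with
    | zero => exact Measure.map_id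
    | succ k ih =>
      conv_rhs => rw [← hκ, ← ih]
      rw [Measure.map_map (by fun_prop) (by fun_prop)]
      congr 1
      ext z n
      simp only [Function.comp]
      congr 1
      omega
  have hD : ∀ k, κ {z | z (k + 1) ≠ T (z k)} = κ {z | z 1 ≠ T (z 0)} := by
    intro k
    conv_rhs => rw [← hmp k]
    rw [Measure.map_apply (by fun_prop)]
    · congr 1
      ext z
      simp [add_comm]
    · exact (isOpen_ne_fun (by fun_prop) (by fun_prop)).measurableSet
  have hbound : ∀ M : ℕ, (M : ENNReal) * κ {z | z 1 ≠ T (z 0)} ≤ 1 := by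
    intro M
    obtain ⟨N, hN⟩ := hy M
    set C : Set (ℕ → X) := {z | ∀ i j, i < j → j < M → z (i + 1) = T (z i) ∨ z (j + 1) = T (z j)}
      with hC
    have hCc : IsClosed C := by
      simp only [hC, Set.setOf_forall, Set.setOf_or]
      refine isClosed_iInter fun i => isClosed_iInter fun j => isClosed_iInter fun _ =>
        isClosed_iInter fun _ => IsClosed.union ?_ ?_
      · exact isClosed_eq (by fun_prop) (by fun_prop)
      · exact isClosed_eq (by fun_prop) (by fun_prop)
    have hsub : closure {z : ℕ → X | ∃ n : ℕ, z = fun m => y (m + n)} ⊆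
        (fun (z : ℕ → X) n => z (n + N)) ⁻¹' C := by
      apply closure_minimal _ (hCc.preimage (by fun_prop))
      rintro z ⟨n, rfl⟩ i j hij hj
      have := hN (n + N) (by omega) i j hij hj
      have e : ∀ a, n + N + a = a + N + n := fun a => by omega
      have e' : ∀ a, n + N + a + 1 = a + 1 + N + n := fun a => by omega
      rw [e', e', e, e] at this
      exact this
    have hC1 : κ C = 1 := by
      apply le_antisymm prob_le_one
      rw [← hκY, ← hmp N, Measure.map_apply (by fun_prop) hCc.measurableSet, hmp N]
      exact measure_mono hsub
    have hCae : ∀ᵐ z ∂κ, z ∈ C := (prob_compl_eq_zero_iff hCc.measurableSet).2 hC1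
    have hu : κ (⋃ i ∈ Finset.range M, {z : ℕ → X | z (i + 1) ≠ T (z i)}) =
        ∑ i ∈ Finset.range M, κ {z : ℕ → X | z (i + 1) ≠ T (z i)} := by
      apply measure_biUnion_finset₀
      · have key : ∀ i j, i < j → j < M → AEDisjoint κ {z : ℕ → X | z (i + 1) ≠ T (z i)}
            {z : ℕ → X | z (j + 1) ≠ T (z j)} := by
          intro i j hij hj
          refine measure_mono_null ?_ hCae
          rintro z ⟨h1, h2⟩ h3
          rcases h3 i j hij hj with h | h
          · exact h1 h
          · exact h2 h
        intro i hi j hj hij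
        simp only [Finset.coe_range, Set.mem_Iio] at hi hj
        rcases lt_or_gt_of_ne hij with h | h
        · exact key i j h hj
        · exact (key j i h hi).symm
      · intro i _
        exact (isOpen_ne_fun (by fun_prop) (by fun_prop)).measurableSet.nullMeasurableSet
    simp only [hD, Finset.sum_const, Finset.card_range, nsmul_eq_mul] at hu
    rw [← hu]
    exact prob_le_one
  have h0 : κ {z | z 1 ≠ T (z 0)} = 0 := by
    by_contra hne
    obtain ⟨n, hn⟩ := ENNReal.exists_nat_mul_gt hne (b := 1) (by simp)
    exact absurd (hbound n) (not_le.2 hn)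
  have hall : ∀ᵐ z ∂κ, ∀ n, z (n + 1) = T (z n) := by
    rw [ae_all_iff]
    intro n
    exact (hD n).trans h0
  filter_upwards [hall] with z hz n
  induction n with
  | zero => rfl
  | succ n ih => rw [hz, ih, Function.iterate_succ_apply']

/-- **Proposition 2.2.** Given a uniquely ergodic `(X,T)` with unique invariant measure `μ`,
a sequence `1 = b₁ < b₂ < ⋯` with `b_{k+1} - b_k → ∞` and points `(x_k)` in `X`, form the
sequence `y ∈ X^ℕ` with `y_n = Tⁿ x_k` for `b_k ≤ n < b_{k+1}`, let `S` be the shift on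
`X^ℕ` and `Y` the closure of the forward `S`-orbit of `y`. Then the measure
`ν = (x ↦ (x, Tx, T²x, …))_* μ` is an `S`-invariant probability measure carried by `Y`,
it is the unique `S`-invariant probability measure carried by `Y` (so `(Y,S)` is uniquely
ergodic), and `(Y,ν,S)` is measure-theoretically isomorphic to `(X,μ,T)`. -/
theorem special_uniquely_ergodic_model
    {X : Type*} [MetricSpace X] [CompactSpace X] [MeasurableSpace X] [BorelSpace X]
    (T : X → X) (hTcont : Continuous T) (μ : Measure X)
    (huniq : UniquelyErgodicWith T μ)
    (b : ℕ → ℕ) (hb1 : b 1 = 1) (hbmono : ∀ k ≥ 1, b k < b (k + 1))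
    (hbgap : Tendsto (fun k : ℕ => b (k + 1) - b k) atTop atTop)
    (x : ℕ → X)
    (y : ℕ → X) (hy : ∀ k ≥ 1, ∀ n : ℕ, b k ≤ n → n < b (k + 1) → y n = T^[n] (x k))
    (S : (ℕ → X) → (ℕ → X)) (hS : S = fun z n => z (n + 1))
    (Y : Set (ℕ → X)) (hY : Y = closure {z : ℕ → X | ∃ n : ℕ, z = S^[n] y})
    (ν : Measure (ℕ → X)) (hν : ν = μ.map (fun p => fun n => T^[n] p)) :
    IsProbabilityMeasure ν ∧ ν.map S = ν ∧ ν Y = 1 ∧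
      (∀ κ : Measure (ℕ → X), IsProbabilityMeasure κ → κ.map S = κ → κ Y = 1 → κ = ν) ∧
      MeasureIso T μ S ν := by
  obtain ⟨hμ, hμT, hμu⟩ := huniq
  have hSn : ∀ n, S^[n] y = fun m => y (m + n) := by
    intro n
    induction n with
    | zero => rfl
    | succ n ih =>
      rw [Function.iterate_succ_apply', ih, hS]
      ext m
      simp only
      congr 1
      omega
  have hScont : Continuous S := by rw [hS]; fun_prop
  have hφc : Continuous (fun p => fun n => T^[n] p : X → ℕ → X) :=
    continuous_pi fun n => hTcont.iterate n
  have hφ := hφc.measurable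
  have hcomm : ∀ p, (fun n => T^[n] (T p)) = S (fun n => T^[n] p) := by
    intro p
    rw [hS]
    ext n
    simp only [Function.iterate_succ_apply]
  have hνp : IsProbabilityMeasure ν := by
    rw [hν]; exact Measure.isProbabilityMeasure_map hφ.aemeasurable
  have huniqY : ∀ κ : Measure (ℕ → X), IsProbabilityMeasure κ → κ.map S = κ → κ Y = 1 →
      κ = ν := by
    intro κ hκp hκS hκY
    have hae := aux_null T hTcont y (aux_comb T b hbmono hbgap x y hy) κ (by rw [← hS]; exact hκS)
      (by simpa only [hY, hSn] using hκY)
    have hm : κ.map (fun z => z 0) = μ := by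
      apply hμu
      · exact Measure.isProbabilityMeasure_map (measurable_pi_apply 0).aemeasurable
      · have hTm := hTcont.measurable
        rw [Measure.map_map hTm (by fun_prop)]
        conv_rhs => rw [← hκS]
        rw [Measure.map_map (by fun_prop) hScont.measurable]
        apply Measure.map_congr
        filter_upwards [hae] with z hz
        simp only [Function.comp, hS]
        rw [hz 1]
        rfl
    rw [hν, ← hm, Measure.map_map hφ (by fun_prop)]
    conv_lhs => rw [← Measure.map_id (μ := κ)]
    apply Measure.map_congr
    filter_upwards [hae] with z hz
    ext n
    exact hz n
  have hYc : IsClosed Y := by rw [hY]; exact isClosed_closure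
  have hSY : Set.MapsTo S Y Y := by
    rw [hY]
    apply Set.MapsTo.closure _ hScont
    rintro z ⟨n, rfl⟩
    exact ⟨n + 1, (Function.iterate_succ_apply' _ _ _).symm⟩
  have hyY : y ∈ Y := by rw [hY]; exact subset_closure ⟨0, rfl⟩
  have hνY : ν Y = 1 := by
    haveI : CompactSpace Y := isCompact_iff_compactSpace.1 hYc.isCompact
    obtain ⟨κ, hκp, hκS⟩ := aux_kb (hSY.restrict S Y Y) (hScont.restrict hSY) ⟨y, hyY⟩
    have hval : Measurable (Subtype.val : Y → ℕ → X) := measurable_subtype_coe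
    have h1 : (κ.map (Subtype.val : Y → ℕ → X)) Y = 1 := by
      rw [Measure.map_apply hval hYc.measurableSet]
      simp
    rw [← huniqY (κ.map (Subtype.val : Y → ℕ → X))
      (Measure.isProbabilityMeasure_map hval.aemeasurable) ?_ h1]
    · exact h1
    · conv_rhs => rw [← hκS]
      rw [Measure.map_map hScont.measurable hval,
        Measure.map_map hval (hScont.restrict hSY).measurable]
      rfl
  refine ⟨hνp, ?_, hνY, huniqY, ?_⟩
  · rw [hν, Measure.map_map hScont.measurable hφ]
    conv_rhs => rw [← hμT]
    rw [Measure.map_map hφ hTcont.measurable]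
    congr 1
    ext1 p
    exact (hcomm p).symm
  · refine ⟨fun p n => T^[n] p, fun z => z 0, hφ, by fun_prop, hν.symm, ?_, ?_, ?_⟩
    · exact Eventually.of_forall fun p => rfl
    · rw [hν, ae_map_iff hφ.aemeasurable]
      · exact Eventually.of_forall fun p => rfl
      · exact (isClosed_eq (hφc.comp (continuous_apply 0)) continuous_id).measurableSet
    · exact Eventually.of_forall hcomm
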